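/- arXiv:math/0412395 — 2 statements merged into one kernel-verified Lean document; each statement's English description precedes it below -/
import Mathlib

section
/- Let T be a symplectic triple system over a field k of characteristic ≠ 2 and let V be a two-dimensional k-vector space with a nonzero alternating bilinear form ⟨·|·⟩. Then g(T) = (sp(V) ⊕ inder(T)) ⊕ (V ⊗ T), with the bracket described in the context, is a Lie algebra. -/
open scoped TensorProduct

/-- A symplectic triple system: a finite-dimensional vector space `T` over a field `k`
with a nonzero alternating bilinear form `B` and a trilinear product `tp` satisfying
identities (a)–(d). -/
def IsSympTripleSystem (k : Type*) {T : Type*} [Field k] [AddCommGroup T] [Module k T]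
    (tp : T →ₗ[k] T →ₗ[k] T →ₗ[k] T) (B : T →ₗ[k] T →ₗ[k] k) : Prop :=
  (∀ x : T, B x x = 0) ∧ B ≠ 0 ∧
  (∀ x y z : T, tp x y z = tp y x z) ∧
  (∀ x y z : T, tp x y z - tp x z y = B x z • y - B x y • z + (2 * B y z) • x) ∧
  (∀ x y u v w : T, tp x y (tp u v w) =
      tp (tp x y u) v w + tp u (tp x y v) w + tp u v (tp x y w)) ∧
  (∀ x y u v : T, B (tp x y u) v + B u (tp x y v) = 0)

/-- The symplectic Lie algebra `sp(V)` of a bilinear form, as a submodule of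
`End(V) = V →ₗ[k] V`. -/
def spSub (k V : Type*) [Field k] [AddCommGroup V] [Module k V]
    (Bv : V →ₗ[k] V →ₗ[k] k) : Submodule k (V →ₗ[k] V) where
  carrier := {f | ∀ u w : V, Bv (f u) w + Bv u (f w) = 0}
  add_mem' := by
    intro f g hf hg u w
    simp only [Set.mem_setOf_eq, LinearMap.add_apply, map_add] at *
    linear_combination hf u w + hg u w
  zero_mem' := by
    intro u w
    simp
  smul_mem' := by
    intro c f hf u w
    simp only [Set.mem_setOf_eq, LinearMap.smul_apply, map_smul, smul_eq_mul] at *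
    linear_combination c * hf u w

/-- `inder(T)`: the linear span of the maps `d_{x,y} = [xy·]`. -/
def inderSub (k T : Type*) [Field k] [AddCommGroup T] [Module k T]
    (tp : T →ₗ[k] T →ₗ[k] T →ₗ[k] T) : Submodule k (T →ₗ[k] T) :=
  Submodule.span k {f : T →ₗ[k] T | ∃ x y : T, f = tp x y}

/-- The map `γ_{u,v} = ⟨u|·⟩v + ⟨v|·⟩u`. -/
def gammaMap (k V : Type*) [Field k] [AddCommGroup V] [Module k V]
    (Bv : V →ₗ[k] V →ₗ[k] k) (u v : V) : V →ₗ[k] V :=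
  (Bv u).smulRight v + (Bv v).smulRight u

/-!
Since `⟨u|v⟩w + ⟨v|w⟩u + ⟨w|u⟩v = 0` in dimension two, and since the modified product
`{x,y,z} = [xyz] - (y|z)x + (z|x)y` is invariant under cyclic rotation by axioms (a) and (b), the
cyclic sum of `[[u⊗x, v⊗y], w⊗z]` equals `(⟨u|v⟩w + ⟨v|w⟩u + ⟨w|u⟩v) ⊗ {x,y,z} = 0`. This is the
part of the Jacobi identity on three odd elements of the `ℤ/2`-graded algebra `L ⊕ M`, where
`L = sp(V) ⊕ inder(T)` and `M = V ⊗ T`; the other parts say that `L` is a Lie algebra, `M` an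
`L`-module, and `M × M → L` an `L`-equivariant map.
-/

attribute [local instance] LieRing.ofAssociativeRing

section Graded

variable {R L M : Type*} [CommRing R] [LieRing L] [LieAlgebra R L] [AddCommGroup M] [Module R M]

/-- The bracket of the `ℤ/2`-graded algebra `L ⊕ M` with even part a Lie algebra `L`, acting on the
odd part `M` through `ρ`, and with product `μ` of odd elements. -/
def gradedBracket (ρ : L →ₗ⁅R⁆ Module.End R M) (μ : M →ₗ[R] M →ₗ[R] L) :
    (L × M) →ₗ[R] (L × M) →ₗ[R] (L × M) :=
  LinearMap.mk₂ R (fun a b => (⁅a.1, b.1⁆ + μ a.2 b.2, ρ a.1 b.2 - ρ b.1 a.2))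
    (fun a a' b => by
      ext <;> simp only [Prod.fst_add, Prod.snd_add, add_lie, map_add, LinearMap.add_apply] <;>
        abel)
    (fun c a b => by ext <;> simp [smul_sub])
    (fun a b b' => by
      ext <;> simp only [Prod.fst_add, Prod.snd_add, lie_add, map_add, LinearMap.add_apply] <;>
        abel)
    (fun c a b => by ext <;> simp [smul_sub])

variable (ρ : L →ₗ⁅R⁆ Module.End R M) {μ : M →ₗ[R] M →ₗ[R] L}

theorem gradedBracket_apply (μ : M →ₗ[R] M →ₗ[R] L) (a b : L × M) :
    gradedBracket ρ μ a b = (⁅a.1, b.1⁆ + μ a.2 b.2, ρ a.1 b.2 - ρ b.1 a.2) :=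
  rfl

theorem gradedBracket_isAlt (hμ : μ.IsAlt) : (gradedBracket ρ μ).IsAlt := fun a => by
  simp [gradedBracket_apply, hμ a.2]

variable {ρ}

theorem gradedBracket_leibniz (hμ : μ.IsAlt)
    (equivariant : ∀ a X Y, ⁅a, μ X Y⁆ = μ (ρ a X) Y + μ X (ρ a Y))
    (cyclic : ∀ X Y Z, ρ (μ X Y) Z + ρ (μ Y Z) X + ρ (μ Z X) Y = 0) (a b c : L × M) :
    gradedBracket ρ μ a (gradedBracket ρ μ b c) =
      gradedBracket ρ μ (gradedBracket ρ μ a b) c +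
        gradedBracket ρ μ b (gradedBracket ρ μ a c) := by
  obtain ⟨a, X⟩ := a
  obtain ⟨b, Y⟩ := b
  obtain ⟨c, Z⟩ := c
  simp only [gradedBracket_apply, Prod.mk_add_mk, Prod.mk.injEq]
  constructor
  · have hYc : μ Y (ρ c X) = -μ (ρ c X) Y := (hμ.neg _ _).symm
    have hcXY : ⁅μ X Y, c⁆ = -(μ (ρ c X) Y + μ X (ρ c Y)) := by
      rw [← lie_skew, equivariant]
    simp only [lie_add, add_lie, map_sub, LinearMap.sub_apply, equivariant, hYc, hcXY,
      leibniz_lie a b c]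
    abel
  · have hXZ : ρ (μ X Z) Y = -ρ (μ Z X) Y := by
      rw [← hμ.neg, map_neg, LinearMap.neg_apply]
    have hodd : ρ (μ X Y) Z = -ρ (μ Y Z) X - ρ (μ Z X) Y := by
      linear_combination (norm := module) cyclic X Y Z
    simp only [map_add, map_sub, LinearMap.add_apply, LieHom.map_lie, Ring.lie_def,
      LinearMap.sub_apply, Module.End.mul_apply, hXZ, hodd]
    abel

end Graded

section Tensor

variable {R V T : Type*} [CommRing R] [AddCommGroup V] [Module R V] [AddCommGroup T] [Module R T]

theorem isAlt_of_tmul {N : Type*} [AddCommGroup N] [Module R N]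
    {β : V ⊗[R] T →ₗ[R] V ⊗[R] T →ₗ[R] N} (self : ∀ u x, β (u ⊗ₜ x) (u ⊗ₜ x) = 0)
    (skew : ∀ u x v y, β (u ⊗ₜ x) (v ⊗ₜ y) = -β (v ⊗ₜ y) (u ⊗ₜ x)) : β.IsAlt := by
  have hflip : β = -β.flip := by
    ext u x v y
    exact skew u x v y
  intro X
  induction X with
  | zero => simp
  | tmul u x => exact self u x
  | add X Y hX hY =>
    have hXY : β X Y = -β Y X := LinearMap.congr_fun₂ hflip X Y
    simp [hX, hY, hXY]

theorem cyclic_sum_eq_zero_of_tmul {N : Type*} [AddCommGroup N] [Module R N]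
    {τ : V ⊗[R] T →ₗ[R] V ⊗[R] T →ₗ[R] V ⊗[R] T →ₗ[R] N}
    (h : ∀ u v w x y z, τ (u ⊗ₜ x) (v ⊗ₜ y) (w ⊗ₜ z) + τ (v ⊗ₜ y) (w ⊗ₜ z) (u ⊗ₜ x) +
      τ (w ⊗ₜ z) (u ⊗ₜ x) (v ⊗ₜ y) = 0) (X Y Z : V ⊗[R] T) :
    τ X Y Z + τ Y Z X + τ Z X Y = 0 := by
  induction X with
  | zero => simp
  | add X X' hX hX' =>
    simp only [map_add, LinearMap.add_apply]
    linear_combination (norm := module) hX + hX'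
  | tmul u x =>
  induction Y with
  | zero => simp
  | add Y Y' hY hY' =>
    simp only [map_add, LinearMap.add_apply]
    linear_combination (norm := module) hY + hY'
  | tmul v y =>
  induction Z with
  | zero => simp
  | add Z Z' hZ hZ' =>
    simp only [map_add, LinearMap.add_apply]
    linear_combination (norm := module) hZ + hZ'
  | tmul w z => exact h u v w x y z

variable {L₁ L₂ : Type*} [LieRing L₁] [LieAlgebra R L₁] [LieRing L₂] [LieAlgebra R L₂]

section Rep

variable (R V T L₁ L₂) [LieRingModule L₁ V] [LieModule R L₁ V] [LieRingModule L₂ T]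
  [LieModule R L₂ T]

/-- The external tensor product of an `L₁`-module `V` and an `L₂`-module `T`, as a representation
of `L₁ × L₂` on `V ⊗ T`. -/
noncomputable def tensorRep : L₁ × L₂ →ₗ⁅R⁆ Module.End R (V ⊗[R] T) where
  toLinearMap :=
    (LinearMap.rTensorHom T ∘ₗ (LieModule.toEnd R L₁ V : L₁ →ₗ[R] Module.End R V)).coprod
      (LinearMap.lTensorHom V ∘ₗ (LieModule.toEnd R L₂ T : L₂ →ₗ[R] Module.End R T))
  map_lie' {a b} := by
    refine TensorProduct.ext' fun v x => ?_
    simp only [AddHom.toFun_eq_coe, LinearMap.coe_toAddHom, LinearMap.coprod_apply,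
      LinearMap.comp_apply, LinearMap.coe_rTensorHom, LinearMap.coe_lTensorHom,
      LieHom.coe_toLinearMap, LieAlgebra.Prod.bracket_apply, LieHom.map_lie, Ring.lie_def,
      LinearMap.add_apply, LinearMap.sub_apply, Module.End.mul_apply, LinearMap.rTensor_tmul,
      LinearMap.lTensor_tmul, map_add, TensorProduct.sub_tmul, TensorProduct.tmul_sub]
    abel

@[simp]
theorem tensorRep_tmul (a : L₁ × L₂) (v : V) (x : T) :
    tensorRep R V T L₁ L₂ a (v ⊗ₜ x) = ⁅a.1, v⁆ ⊗ₜ x + v ⊗ₜ ⁅a.2, x⁆ :=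
  rfl

end Rep

/-- The product `[u ⊗ x, v ⊗ y] = ((x|y) γ(u,v), ⟨u|v⟩ δ(x,y))` on `V ⊗ T`, for forms `ω = ⟨·|·⟩`
on `V` and `B = (·|·)` on `T`. -/
noncomputable def tensorBracket (ω : V →ₗ[R] V →ₗ[R] R) (B : T →ₗ[R] T →ₗ[R] R)
    (γ : V →ₗ[R] V →ₗ[R] L₁) (δ : T →ₗ[R] T →ₗ[R] L₂) :
    V ⊗[R] T →ₗ[R] V ⊗[R] T →ₗ[R] L₁ × L₂ :=
  (TensorProduct.map₂ γ B).compr₂ (LinearMap.inl R L₁ L₂ ∘ₗ (TensorProduct.rid R L₁).toLinearMap) +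
    (TensorProduct.map₂ ω δ).compr₂ (LinearMap.inr R L₁ L₂ ∘ₗ (TensorProduct.lid R L₂).toLinearMap)

variable {ω : V →ₗ[R] V →ₗ[R] R} {B : T →ₗ[R] T →ₗ[R] R} {γ : V →ₗ[R] V →ₗ[R] L₁}
  {δ : T →ₗ[R] T →ₗ[R] L₂}

@[simp]
theorem tensorBracket_tmul_tmul (u v : V) (x y : T) :
    tensorBracket ω B γ δ (u ⊗ₜ x) (v ⊗ₜ y) = (B x y • γ u v, ω u v • δ x y) := by
  simp [tensorBracket]

theorem tensorBracket_isAlt (hω : ω.IsAlt) (hB : B.IsAlt) (γ_symm : ∀ u v, γ u v = γ v u)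
    (δ_symm : ∀ x y, δ x y = δ y x) : (tensorBracket ω B γ δ).IsAlt := by
  refine isAlt_of_tmul (fun u x => ?_) (fun u x v y => ?_)
  · simp [hω u, hB x]
  · simp [← hω.neg v u, ← hB.neg y x, γ_symm u v, δ_symm x y]

variable [LieRingModule L₁ V] [LieModule R L₁ V] [LieRingModule L₂ T] [LieModule R L₂ T]

theorem lie_tensorBracket (hω : ∀ (s : L₁) u v, ω ⁅s, u⁆ v + ω u ⁅s, v⁆ = 0)
    (hB : ∀ (d : L₂) x y, B ⁅d, x⁆ y + B x ⁅d, y⁆ = 0)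
    (hγ : ∀ (s : L₁) u v, ⁅s, γ u v⁆ = γ ⁅s, u⁆ v + γ u ⁅s, v⁆)
    (hδ : ∀ (d : L₂) x y, ⁅d, δ x y⁆ = δ ⁅d, x⁆ y + δ x ⁅d, y⁆)
    (a : L₁ × L₂) (X Y : V ⊗[R] T) :
    ⁅a, tensorBracket ω B γ δ X Y⁆ =
      tensorBracket ω B γ δ (tensorRep R V T L₁ L₂ a X) Y +
        tensorBracket ω B γ δ X (tensorRep R V T L₁ L₂ a Y) := by
  suffices h : (tensorBracket ω B γ δ).compr₂ (LieAlgebra.ad R (L₁ × L₂) a : _ →ₗ[R] _) =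
      tensorBracket ω B γ δ ∘ₗ tensorRep R V T L₁ L₂ a +
        (tensorBracket ω B γ δ).compl₂ (tensorRep R V T L₁ L₂ a) from
    LinearMap.congr_fun₂ h X Y
  refine TensorProduct.ext' fun u x => TensorProduct.ext' fun v y => ?_
  have hBd : B ⁅a.2, x⁆ y = -B x ⁅a.2, y⁆ := eq_neg_of_add_eq_zero_left (hB a.2 x y)
  have hωs : ω ⁅a.1, u⁆ v = -ω u ⁅a.1, v⁆ := eq_neg_of_add_eq_zero_left (hω a.1 u v)
  change ⁅a, tensorBracket ω B γ δ (u ⊗ₜ x) (v ⊗ₜ y)⁆ =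
    tensorBracket ω B γ δ (tensorRep R V T L₁ L₂ a (u ⊗ₜ x)) (v ⊗ₜ y) +
      tensorBracket ω B γ δ (u ⊗ₜ x) (tensorRep R V T L₁ L₂ a (v ⊗ₜ y))
  simp only [tensorRep_tmul, map_add, LinearMap.add_apply, tensorBracket_tmul_tmul,
    LieAlgebra.Prod.bracket_apply, lie_smul, hγ, hδ, hBd, hωs, Prod.mk_add_mk, Prod.mk.injEq]
  constructor <;> module

end Tensor

theorem cyclic_sum_smul_eq_zero_of_isAlt {R V : Type*} [CommRing R] [AddCommGroup V] [Module R V]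
    (b : Module.Basis (Fin 2) R V) {ω : V →ₗ[R] V →ₗ[R] R} (hω : ω.IsAlt) (u v w : V) :
    ω u v • w + ω v w • u + ω w u • v = 0 := by
  rw [← b.sum_repr u, ← b.sum_repr v, ← b.sum_repr w]
  simp only [Fin.sum_univ_two, map_add, map_smul, LinearMap.add_apply, LinearMap.smul_apply,
    smul_eq_mul, hω (b _), ← hω.neg (b 0) (b 1)]
  module

section Symplectic

variable {k V : Type*} [Field k] [AddCommGroup V] [Module k V] {ω : V →ₗ[k] V →ₗ[k] k}

theorem spSub_eq_skewAdjointSubmodule : spSub k V ω = ω.skewAdjointSubmodule := by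
  ext f
  rw [LinearMap.mem_skewAdjointSubmodule]
  refine forall₂_congr fun u w => ?_
  rw [Pi.neg_apply, map_neg, eq_neg_iff_add_eq_zero]

theorem lie_mem_spSub {f g : Module.End k V} (hf : f ∈ spSub k V ω) (hg : g ∈ spSub k V ω) :
    ⁅f, g⁆ ∈ spSub k V ω := by
  rw [spSub_eq_skewAdjointSubmodule] at *
  exact LinearMap.BilinForm.isSkewAdjoint_bracket ω hf hg

variable (ω) in
/-- `sp(V)` as a Lie subalgebra of `gl(V)`. -/
def spLie : LieSubalgebra k (Module.End k V) where
  toSubmodule := spSub k V ω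
  lie_mem' := lie_mem_spSub

theorem gammaMap_apply (u v w : V) : gammaMap k V ω u v w = ω u w • v + ω v w • u :=
  rfl

theorem gammaMap_mem_spSub (hω : ω.IsAlt) (u v : V) : gammaMap k V ω u v ∈ spSub k V ω := by
  intro x y
  simp only [gammaMap_apply, map_add, map_smul, LinearMap.add_apply, LinearMap.smul_apply,
    smul_eq_mul, ← hω.neg u x, ← hω.neg v x]
  ring

/-- `γ` as a bilinear map into `sp(V)`. -/
def gammaBilin (hω : ω.IsAlt) : V →ₗ[k] V →ₗ[k] spLie ω :=
  LinearMap.mk₂ k (fun u v => ⟨gammaMap k V ω u v, gammaMap_mem_spSub hω u v⟩)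
    (fun u u' v => by
      ext w
      simp only [gammaMap_apply, map_add, LinearMap.add_apply, AddMemClass.coe_add]
      module)
    (fun c u v => by
      ext w
      simp only [gammaMap_apply, map_smul, LinearMap.smul_apply, smul_eq_mul,
        SetLike.val_smul]
      module)
    (fun u v v' => by
      ext w
      simp only [gammaMap_apply, map_add, LinearMap.add_apply, AddMemClass.coe_add]
      module)
    (fun c u v => by
      ext w
      simp only [gammaMap_apply, map_smul, LinearMap.smul_apply, smul_eq_mul,
        SetLike.val_smul]
      module)

theorem gammaBilin_lie (hω : ω.IsAlt) (u v w : V) :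
    ⁅gammaBilin hω u v, w⁆ = ω u w • v + ω v w • u :=
  rfl

theorem gammaBilin_comm (hω : ω.IsAlt) (u v : V) : gammaBilin hω u v = gammaBilin hω v u :=
  Subtype.ext (add_comm _ _)

theorem spLie_lie_add_lie (s : spLie ω) (u v : V) : ω ⁅s, u⁆ v + ω u ⁅s, v⁆ = 0 :=
  s.2 u v

theorem lie_gammaBilin (hω : ω.IsAlt) (s : spLie ω) (u v : V) :
    ⁅s, gammaBilin hω u v⁆ = gammaBilin hω ⁅s, u⁆ v + gammaBilin hω u ⁅s, v⁆ := by
  refine Subtype.ext (LinearMap.ext fun w => ?_)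
  change ⁅⁅s, gammaBilin hω u v⁆, w⁆ = ⁅gammaBilin hω ⁅s, u⁆ v, w⁆ + ⁅gammaBilin hω u ⁅s, v⁆, w⁆
  have hu : ω ⁅s, u⁆ w = -ω u ⁅s, w⁆ := eq_neg_of_add_eq_zero_left (spLie_lie_add_lie s u w)
  have hv : ω ⁅s, v⁆ w = -ω v ⁅s, w⁆ := eq_neg_of_add_eq_zero_left (spLie_lie_add_lie s v w)
  simp only [lie_lie, gammaBilin_lie, lie_add, lie_smul, hu, hv]
  module

end Symplectic

section TripleSystem

variable {k T : Type*} [Field k] [AddCommGroup T] [Module k T]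
  {tp : T →ₗ[k] T →ₗ[k] T →ₗ[k] T} {B : T →ₗ[k] T →ₗ[k] k}

variable (tp B) in
/-- The product `{x,y,z} = [xyz] - (y|z)x + (z|x)y`, a modification of the triple product of a
symplectic triple system which is invariant under cyclic rotation. -/
def cyclicProduct (x y z : T) : T := tp x y z - B y z • x + B z x • y

namespace IsSympTripleSystem

variable (h : IsSympTripleSystem k tp B)

include h

theorem isAlt : B.IsAlt := h.1

theorem product_comm (x y : T) : tp x y = tp y x := LinearMap.ext (h.2.2.1 x y)

theorem product_sub_product_swap (x y z : T) :
    tp x y z - tp x z y = B x z • y - B x y • z + (2 * B y z) • x :=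
  h.2.2.2.1 x y z

theorem cyclicProduct_rotate (x y z : T) :
    cyclicProduct tp B y z x = cyclicProduct tp B x y z := by
  have hyzx : tp y z x = tp x y z + B y x • z - B y z • x + (2 * B z x) • y := by
    rw [h.product_comm x y]
    linear_combination (norm := module) h.product_sub_product_swap y z x
  rw [cyclicProduct, cyclicProduct, hyzx, ← h.isAlt.neg x y]
  module

theorem inderSub_le_spSub : inderSub k T tp ≤ spSub k T B :=
  Submodule.span_le.2 fun _ ⟨x, y, hd⟩ => hd ▸ h.2.2.2.2.2 x y

theorem lie_product {d : Module.End k T} (hd : d ∈ inderSub k T tp) (x y : T) :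
    ⁅d, (tp x y : Module.End k T)⁆ = tp (d x) y + tp x (d y) := by
  induction hd using Submodule.span_induction with
  | mem d hd =>
    obtain ⟨u, v, rfl⟩ := hd
    ext z
    simp [Ring.lie_def, h.2.2.2.2.1 u v x y z]
  | zero => simp
  | add d e _ _ hd he =>
    simp only [add_lie, hd, he, LinearMap.add_apply, map_add]
    abel
  | smul c d _ hd => simp only [smul_lie, hd, LinearMap.smul_apply, map_smul, smul_add]

theorem lie_mem_inderSub {d e : Module.End k T} (hd : d ∈ inderSub k T tp)
    (he : e ∈ inderSub k T tp) : ⁅d, e⁆ ∈ inderSub k T tp := by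
  induction he using Submodule.span_induction with
  | mem e he =>
    obtain ⟨x, y, rfl⟩ := he
    rw [h.lie_product hd]
    exact add_mem (Submodule.subset_span ⟨_, _, rfl⟩) (Submodule.subset_span ⟨_, _, rfl⟩)
  | zero => simp
  | add e f _ _ he hf => rw [lie_add]; exact add_mem he hf
  | smul c e _ he => rw [lie_smul]; exact Submodule.smul_mem _ c he

/-- `inder(T)` as a Lie subalgebra of `gl(T)`. -/
def inderLie : LieSubalgebra k (Module.End k T) where
  toSubmodule := inderSub k T tp
  lie_mem' := h.lie_mem_inderSub

/-- `(x, y) ↦ d_{x,y}` as a bilinear map into `inder(T)`. -/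
def inderBilin : T →ₗ[k] T →ₗ[k] h.inderLie :=
  LinearMap.mk₂ k (fun x y => ⟨tp x y, Submodule.subset_span ⟨x, y, rfl⟩⟩)
    (fun x x' y => by ext z; simp)
    (fun c x y => by ext z; simp)
    (fun x y y' => by ext z; simp)
    (fun c x y => by ext z; simp)

theorem inderBilin_lie (x y z : T) : ⁅h.inderBilin x y, z⁆ = tp x y z :=
  rfl

theorem inderBilin_comm (x y : T) : h.inderBilin x y = h.inderBilin y x :=
  Subtype.ext (h.product_comm x y)

theorem inderLie_lie_add_lie (d : h.inderLie) (x y : T) : B ⁅d, x⁆ y + B x ⁅d, y⁆ = 0 :=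
  h.inderSub_le_spSub d.2 x y

theorem lie_inderBilin (d : h.inderLie) (x y : T) :
    ⁅d, h.inderBilin x y⁆ = h.inderBilin ⁅d, x⁆ y + h.inderBilin x ⁅d, y⁆ :=
  Subtype.ext (h.lie_product d.2 x y)

variable {V : Type*} [AddCommGroup V] [Module k V] {ω : V →ₗ[k] V →ₗ[k] k} (hω : ω.IsAlt)

/-- The component `V ⊗ T → V ⊗ T → sp(V) ⊕ inder(T)` of the bracket of `g(T)`. -/
noncomputable def oddBracket :
    V ⊗[k] T →ₗ[k] V ⊗[k] T →ₗ[k] spLie ω × h.inderLie :=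
  tensorBracket ω B (gammaBilin hω) h.inderBilin

theorem tensorRep_oddBracket_tmul (u v w : V) (x y z : T) :
    tensorRep k V T (spLie ω) h.inderLie (h.oddBracket hω (u ⊗ₜ x) (v ⊗ₜ y)) (w ⊗ₜ z) =
      B x y • (ω u w • v + ω v w • u) ⊗ₜ z + ω u v • w ⊗ₜ tp x y z := by
  simp only [oddBracket, tensorBracket_tmul_tmul, tensorRep_tmul, smul_lie, gammaBilin_lie,
    inderBilin_lie, TensorProduct.smul_tmul', TensorProduct.tmul_smul]

theorem cyclic_sum_tensorRep_oddBracket_tmul (b : Module.Basis (Fin 2) k V)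
    (u v w : V) (x y z : T) :
    tensorRep k V T (spLie ω) h.inderLie (h.oddBracket hω (u ⊗ₜ x) (v ⊗ₜ y)) (w ⊗ₜ z) +
      tensorRep k V T (spLie ω) h.inderLie (h.oddBracket hω (v ⊗ₜ y) (w ⊗ₜ z)) (u ⊗ₜ x) +
      tensorRep k V T (spLie ω) h.inderLie (h.oddBracket hω (w ⊗ₜ z) (u ⊗ₜ x)) (v ⊗ₜ y) = 0 := by
  calc
    _ = (ω u v • w) ⊗ₜ[k] cyclicProduct tp B x y z + (ω v w • u) ⊗ₜ cyclicProduct tp B y z x +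
          (ω w u • v) ⊗ₜ cyclicProduct tp B z x y := by
      simp only [tensorRep_oddBracket_tmul, cyclicProduct, TensorProduct.add_tmul,
        TensorProduct.tmul_add, TensorProduct.tmul_sub, TensorProduct.tmul_smul,
        ← TensorProduct.smul_tmul', ← hω.neg u v, ← hω.neg v w, ← hω.neg w u]
      module
    _ = (ω u v • w + ω v w • u + ω w u • v) ⊗ₜ cyclicProduct tp B x y z := by
      rw [h.cyclicProduct_rotate x y z, ← h.cyclicProduct_rotate z x y, TensorProduct.add_tmul,
        TensorProduct.add_tmul]
    _ = 0 := by
      rw [cyclic_sum_smul_eq_zero_of_isAlt b hω, TensorProduct.zero_tmul]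

/-- The bracket of `g(T) = (sp(V) ⊕ inder(T)) ⊕ (V ⊗ T)`. -/
noncomputable def bracket :
    ((spLie ω × h.inderLie) × V ⊗[k] T) →ₗ[k] ((spLie ω × h.inderLie) × V ⊗[k] T) →ₗ[k]
      ((spLie ω × h.inderLie) × V ⊗[k] T) :=
  gradedBracket (tensorRep k V T (spLie ω) h.inderLie) (h.oddBracket hω)

theorem oddBracket_isAlt : (h.oddBracket hω).IsAlt :=
  tensorBracket_isAlt hω h.isAlt (gammaBilin_comm hω) h.inderBilin_comm

theorem bracket_isAlt : (h.bracket hω).IsAlt :=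
  gradedBracket_isAlt _ (h.oddBracket_isAlt hω)

theorem cyclic_sum_tensorRep_oddBracket (b : Module.Basis (Fin 2) k V) (X Y Z : V ⊗[k] T) :
    tensorRep k V T (spLie ω) h.inderLie (h.oddBracket hω X Y) Z +
      tensorRep k V T (spLie ω) h.inderLie (h.oddBracket hω Y Z) X +
      tensorRep k V T (spLie ω) h.inderLie (h.oddBracket hω Z X) Y = 0 :=
  cyclic_sum_eq_zero_of_tmul
    (τ := (h.oddBracket hω).compr₂ (tensorRep k V T (spLie ω) h.inderLie).toLinearMap)
    (h.cyclic_sum_tensorRep_oddBracket_tmul hω b) X Y Z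

theorem bracket_leibniz (b : Module.Basis (Fin 2) k V)
    (X Y Z : (spLie ω × h.inderLie) × V ⊗[k] T) :
    h.bracket hω X (h.bracket hω Y Z) =
      h.bracket hω (h.bracket hω X Y) Z + h.bracket hω Y (h.bracket hω X Z) :=
  gradedBracket_leibniz (h.oddBracket_isAlt hω)
    (lie_tensorBracket spLie_lie_add_lie h.inderLie_lie_add_lie (lie_gammaBilin hω)
      h.lie_inderBilin)
    (h.cyclic_sum_tensorRep_oddBracket hω b) X Y Z

theorem bracket_sp_sp (s s' : spLie ω) :
    h.bracket hω ((s, 0), 0) ((s', 0), 0) = ((⁅s, s'⁆, 0), 0) := by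
  simp [bracket, gradedBracket_apply]

theorem bracket_inder_inder (d d' : h.inderLie) :
    h.bracket hω ((0, d), 0) ((0, d'), 0) = ((0, ⁅d, d'⁆), 0) := by
  simp [bracket, gradedBracket_apply]

theorem bracket_sp_inder (s : spLie ω) (d : h.inderLie) :
    h.bracket hω ((s, 0), 0) ((0, d), 0) = 0 := by
  simp [bracket, gradedBracket_apply]

theorem bracket_sp_tmul (s : spLie ω) (v : V) (x : T) :
    h.bracket hω ((s, 0), 0) ((0, 0), v ⊗ₜ x) = ((0, 0), ⁅s, v⁆ ⊗ₜ x) := by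
  simp [bracket, gradedBracket_apply]

theorem bracket_inder_tmul (d : h.inderLie) (v : V) (x : T) :
    h.bracket hω ((0, d), 0) ((0, 0), v ⊗ₜ x) = ((0, 0), v ⊗ₜ ⁅d, x⁆) := by
  simp [bracket, gradedBracket_apply]

theorem bracket_tmul_tmul (u v : V) (x y : T) :
    h.bracket hω (0, u ⊗ₜ x) (0, v ⊗ₜ y) =
      ((B x y • gammaBilin hω u v, ω u v • h.inderBilin x y), 0) := by
  simp [bracket, gradedBracket_apply, oddBracket]

end IsSympTripleSystem

end TripleSystem

theorem gT_is_Lie_algebra_general (k V T : Type*) [Field k]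
    [AddCommGroup V] [Module k V] [AddCommGroup T] [Module k T]
    (hV : Module.finrank k V = 2)
    (Bv : V →ₗ[k] V →ₗ[k] k) (hValt : ∀ v : V, Bv v v = 0)
    (tp : T →ₗ[k] T →ₗ[k] T →ₗ[k] T) (B : T →ₗ[k] T →ₗ[k] k)
    (hsts : IsSympTripleSystem k tp B) :
    ∃ br : ((↥(spSub k V Bv) × ↥(inderSub k T tp)) × (V ⊗[k] T)) →ₗ[k]
        ((↥(spSub k V Bv) × ↥(inderSub k T tp)) × (V ⊗[k] T)) →ₗ[k]
        ((↥(spSub k V Bv) × ↥(inderSub k T tp)) × (V ⊗[k] T)),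
      (∀ a, br a a = 0) ∧
      (∀ a b c, br a (br b c) = br (br a b) c + br b (br a c)) ∧
      (∀ s s' : ↥(spSub k V Bv),
        ((br ((s, 0), 0) ((s', 0), 0)).1.1 : V →ₗ[k] V) =
            (s : V →ₗ[k] V) ∘ₗ (s' : V →ₗ[k] V) - (s' : V →ₗ[k] V) ∘ₗ (s : V →ₗ[k] V) ∧
          (br ((s, 0), 0) ((s', 0), 0)).1.2 = 0 ∧
          (br ((s, 0), 0) ((s', 0), 0)).2 = 0) ∧
      (∀ d d' : ↥(inderSub k T tp),
        (br ((0, d), 0) ((0, d'), 0)).1.1 = 0 ∧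
          ((br ((0, d), 0) ((0, d'), 0)).1.2 : T →ₗ[k] T) =
            (d : T →ₗ[k] T) ∘ₗ (d' : T →ₗ[k] T) - (d' : T →ₗ[k] T) ∘ₗ (d : T →ₗ[k] T) ∧
          (br ((0, d), 0) ((0, d'), 0)).2 = 0) ∧
      (∀ (s : ↥(spSub k V Bv)) (d : ↥(inderSub k T tp)),
        br ((s, 0), 0) ((0, d), 0) = 0) ∧
      (∀ (s : ↥(spSub k V Bv)) (v : V) (x : T),
        br ((s, 0), 0) ((0, 0), v ⊗ₜ[k] x) = ((0, 0), ((s : V →ₗ[k] V) v) ⊗ₜ[k] x)) ∧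
      (∀ (d : ↥(inderSub k T tp)) (v : V) (x : T),
        br ((0, d), 0) ((0, 0), v ⊗ₜ[k] x) = ((0, 0), v ⊗ₜ[k] ((d : T →ₗ[k] T) x))) ∧
      (∀ (u v : V) (x y : T),
        ((br ((0, 0), u ⊗ₜ[k] x) ((0, 0), v ⊗ₜ[k] y)).1.1 : V →ₗ[k] V) =
            B x y • gammaMap k V Bv u v ∧
          ((br ((0, 0), u ⊗ₜ[k] x) ((0, 0), v ⊗ₜ[k] y)).1.2 : T →ₗ[k] T) =
            Bv u v • tp x y ∧
          (br ((0, 0), u ⊗ₜ[k] x) ((0, 0), v ⊗ₜ[k] y)).2 = 0) := by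
  have : FiniteDimensional k V := Module.finite_of_finrank_eq_succ hV
  refine ⟨hsts.bracket hValt, hsts.bracket_isAlt hValt,
    hsts.bracket_leibniz hValt (Module.finBasisOfFinrankEq k V hV), fun s s' => ?_, fun d d' => ?_,
    hsts.bracket_sp_inder hValt, hsts.bracket_sp_tmul hValt, hsts.bracket_inder_tmul hValt,
    fun u v x y => ?_⟩
  · have hss' := hsts.bracket_sp_sp hValt s s'
    exact ⟨congrArg (fun p => (p.1.1 : V →ₗ[k] V)) hss', congrArg (·.1.2) hss',
      congrArg Prod.snd hss'⟩
  · have hdd' := hsts.bracket_inder_inder hValt d d'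
    exact ⟨congrArg (·.1.1) hdd', congrArg (fun p => (p.1.2 : T →ₗ[k] T)) hdd',
      congrArg Prod.snd hdd'⟩
  · have hXY := hsts.bracket_tmul_tmul hValt u v x y
    exact ⟨congrArg (fun p => (p.1.1 : V →ₗ[k] V)) hXY,
      congrArg (fun p => (p.1.2 : T →ₗ[k] T)) hXY, congrArg Prod.snd hXY⟩

/-- For a symplectic triple system `T` (char k ≠ 2) and a two-dimensional
space `V` with a nonzero alternating form, the space
`g(T) = (sp(V) ⊕ inder(T)) ⊕ (V ⊗ T)`, with the bracket determined by: `sp(V) ⊕ inder(T)`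
a direct sum of commuting Lie algebras of endomorphisms, acting naturally on `V ⊗ T`, and
`[u⊗x, v⊗y] = (x|y)γ_{u,v} + ⟨u|v⟩d_{x,y}`, is a Lie algebra (i.e. there exists a bilinear
alternating bracket with these values which satisfies the Jacobi identity). -/
theorem gT_is_Lie_algebra (k V T : Type*) [Field k]
    [AddCommGroup V] [Module k V] [AddCommGroup T] [Module k T]
    [FiniteDimensional k V] [FiniteDimensional k T]
    (hchar : ringChar k ≠ 2) (hV : Module.finrank k V = 2)
    (Bv : V →ₗ[k] V →ₗ[k] k) (hValt : ∀ v : V, Bv v v = 0) (hVne : Bv ≠ 0)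
    (tp : T →ₗ[k] T →ₗ[k] T →ₗ[k] T) (B : T →ₗ[k] T →ₗ[k] k)
    (hsts : IsSympTripleSystem k tp B) :
    ∃ br : ((↥(spSub k V Bv) × ↥(inderSub k T tp)) × (V ⊗[k] T)) →ₗ[k]
        ((↥(spSub k V Bv) × ↥(inderSub k T tp)) × (V ⊗[k] T)) →ₗ[k]
        ((↥(spSub k V Bv) × ↥(inderSub k T tp)) × (V ⊗[k] T)),
      -- the bracket is alternating
      (∀ a, br a a = 0) ∧
      -- the bracket satisfies the Jacobi identity (in Leibniz form)
      (∀ a b c, br a (br b c) = br (br a b) c + br b (br a c)) ∧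
      -- on sp(V), the bracket is the commutator
      (∀ s s' : ↥(spSub k V Bv),
        ((br ((s, 0), 0) ((s', 0), 0)).1.1 : V →ₗ[k] V) =
            (s : V →ₗ[k] V) ∘ₗ (s' : V →ₗ[k] V) - (s' : V →ₗ[k] V) ∘ₗ (s : V →ₗ[k] V) ∧
          (br ((s, 0), 0) ((s', 0), 0)).1.2 = 0 ∧
          (br ((s, 0), 0) ((s', 0), 0)).2 = 0) ∧
      -- on inder(T), the bracket is the commutator
      (∀ d d' : ↥(inderSub k T tp),
        (br ((0, d), 0) ((0, d'), 0)).1.1 = 0 ∧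
          ((br ((0, d), 0) ((0, d'), 0)).1.2 : T →ₗ[k] T) =
            (d : T →ₗ[k] T) ∘ₗ (d' : T →ₗ[k] T) - (d' : T →ₗ[k] T) ∘ₗ (d : T →ₗ[k] T) ∧
          (br ((0, d), 0) ((0, d'), 0)).2 = 0) ∧
      -- sp(V) and inder(T) commute
      (∀ (s : ↥(spSub k V Bv)) (d : ↥(inderSub k T tp)),
        br ((s, 0), 0) ((0, d), 0) = 0) ∧
      -- sp(V) acts on the first slot of V ⊗ T
      (∀ (s : ↥(spSub k V Bv)) (v : V) (x : T),
        br ((s, 0), 0) ((0, 0), v ⊗ₜ[k] x) = ((0, 0), ((s : V →ₗ[k] V) v) ⊗ₜ[k] x)) ∧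
      -- inder(T) acts on the second slot of V ⊗ T
      (∀ (d : ↥(inderSub k T tp)) (v : V) (x : T),
        br ((0, d), 0) ((0, 0), v ⊗ₜ[k] x) = ((0, 0), v ⊗ₜ[k] ((d : T →ₗ[k] T) x))) ∧
      -- [u⊗x, v⊗y] = (x|y)γ_{u,v} + ⟨u|v⟩d_{x,y}
      (∀ (u v : V) (x y : T),
        ((br ((0, 0), u ⊗ₜ[k] x) ((0, 0), v ⊗ₜ[k] y)).1.1 : V →ₗ[k] V) =
            B x y • gammaMap k V Bv u v ∧
          ((br ((0, 0), u ⊗ₜ[k] x) ((0, 0), v ⊗ₜ[k] y)).1.2 : T →ₗ[k] T) =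
            Bv u v • tp x y ∧
          (br ((0, 0), u ⊗ₜ[k] x) ((0, 0), v ⊗ₜ[k] y)).2 = 0) := by
  exact gT_is_Lie_algebra_general k V T hV Bv hValt tp B hsts
end

section
/- Let (·|·) be an alternating bilinear form (possibly degenerate or zero) on a finite-dimensional vector space T over a field of characteristic ≠ 2, and let [xyz] and ⟨xyz⟩ be two triple products on T related by [xyz] = −2⟨zxy⟩ + (x|y)z for all x,y,z ∈ T. Then (T, [···], (·|·)) satisfies the four symplectic triple system identities (a)–(d) if and only if (T, ⟨···⟩, (·|·)) is a Faulkner ternary algebra. In particular, the symplectic triple systems are in bijection with the Faulkner ternary algebras with nonzero alternating bilinear form. -/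
/-- The four defining identities (a)–(d) of a symplectic triple system, for a trilinear
product `tp` and an alternating bilinear form `B` (possibly degenerate or zero). -/
def STSIdentities (k : Type*) {T : Type*} [Field k] [AddCommGroup T] [Module k T]
    (tp : T →ₗ[k] T →ₗ[k] T →ₗ[k] T) (B : T →ₗ[k] T →ₗ[k] k) : Prop :=
  (∀ x y z : T, tp x y z = tp y x z) ∧
  (∀ x y z : T, tp x y z - tp x z y = B x z • y - B x y • z + (2 * B y z) • x) ∧
  (∀ x y u v w : T, tp x y (tp u v w) =
      tp (tp x y u) v w + tp u (tp x y v) w + tp u v (tp x y w)) ∧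
  (∀ x y u v : T, B (tp x y u) v + B u (tp x y v) = 0)

/-- A Faulkner ternary algebra: an alternating bilinear form `B` and a trilinear product
`f` satisfying the three Faulkner identities. -/
def IsFaulknerTernary (k : Type*) {T : Type*} [Field k] [AddCommGroup T] [Module k T]
    (f : T →ₗ[k] T →ₗ[k] T →ₗ[k] T) (B : T →ₗ[k] T →ₗ[k] k) : Prop :=
  (∀ x y z : T, f x y z = f y x z + B x y • z) ∧
  (∀ x y z : T, f x y z = f x z y + B y z • x) ∧
  (∀ x y z v w : T, f (f x y z) v w =
      f (f x v w) y z + f x (f y v w) z + f x y (f z w v))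

/-! Write `s x y z = -2 f z x y + B x y • z`. Putting `x = y = z` in (b), or in the first Faulkner
identity, shows that `B` is alternating. After cancelling the factor `2`, symmetry of `s` in its
first two arguments (a) is the second Faulkner identity; granted this, (b) is the first one, and
the third one says that every operator `s v w` is a derivation of `f`.

The first Faulkner identity expresses the form through the product, and applying a derivation `D`
of `f` to it leaves `(B (D x) y + B x (D y)) • z = 0`. Hence derivations of `f` are skew-adjoint,
which for the operators `s v w` is (d). A skew-adjoint operator is a derivation of `f` exactly when
it is a derivation of `s`, which for the operators `s v w` is (c). -/

section TripleProduct

variable {R M : Type*} [CommRing R] [AddCommGroup M] [Module R M]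

theorem eq_iff_eq_of_sub_eq_neg_smul_sub {r : R} (hr : IsSMulRegular M r) {a b c d : M}
    (h : a - b = -(r • (c - d))) : a = b ↔ c = d := by
  rw [← sub_eq_zero, h, neg_eq_zero, smul_sub, sub_eq_zero]
  exact hr.eq_iff

/-- The triple product `-2 f z x y + B x y • z` attached to `f` and `B`; it is a symplectic triple
product when `f` is a Faulkner one. -/
def symplecticProduct (B : M →ₗ[R] M →ₗ[R] R) (f : M →ₗ[R] M →ₗ[R] M →ₗ[R] M) :
    M →ₗ[R] M →ₗ[R] M →ₗ[R] M :=
  -((2 : R) • LinearMap.lflip.comp f.flip) + B.compr₂ (LinearMap.lsmul R M)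

@[simp]
theorem symplecticProduct_apply (B : M →ₗ[R] M →ₗ[R] R) (f : M →ₗ[R] M →ₗ[R] M →ₗ[R] M)
    (x y z : M) : symplecticProduct B f x y z = -((2 : R) • f z x y) + B x y • z :=
  rfl

/-- The correspondence `f ↦ symplecticProduct B f` between all triple products, the inverse
sending `t` to the product `(B y z • x - t y z x) / 2`. -/
def symplecticProductEquiv [Invertible (2 : R)] (B : M →ₗ[R] M →ₗ[R] R) :
    (M →ₗ[R] M →ₗ[R] M →ₗ[R] M) ≃ (M →ₗ[R] M →ₗ[R] M →ₗ[R] M) where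
  toFun := symplecticProduct B
  invFun t := ⅟(2 : R) • (LinearMap.lflip.comp (B.compr₂ (LinearMap.lsmul R M) - t)).flip
  left_inv f := by
    ext x y z
    simp
  right_inv t := by
    ext x y z
    simp

/-- The operator `D` satisfies the Leibniz rule with respect to the triple product `t`. -/
def IsTripleDerivation (t : M →ₗ[R] M →ₗ[R] M →ₗ[R] M) (D : Module.End R M) : Prop :=
  ∀ x y z : M, D (t x y z) = t (D x) y z + t x (D y) z + t x y (D z)

variable {B : M →ₗ[R] M →ₗ[R] R} {f : M →ₗ[R] M →ₗ[R] M →ₗ[R] M}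

theorem isSkewAdjoint_iff_add_eq_zero {D : Module.End R M} :
    B.IsSkewAdjoint D ↔ ∀ x y : M, B (D x) y + B x (D y) = 0 := by
  simp [LinearMap.IsSkewAdjoint, LinearMap.IsAdjointPair, add_eq_zero_iff_eq_neg]

theorem symplecticProduct_comm_iff (h2 : IsSMulRegular M (2 : R)) (hB : B.IsAlt) (x y z : M) :
    symplecticProduct B f y z x = symplecticProduct B f z y x ↔
      f x y z = f x z y + B y z • x := by
  have sub_eq : symplecticProduct B f y z x - symplecticProduct B f z y x =
      -((2 : R) • (f x y z - (f x z y + B y z • x))) := by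
    simp only [symplecticProduct_apply, ← hB.neg y z]
    module
  exact eq_iff_eq_of_sub_eq_neg_smul_sub h2 sub_eq

theorem symplecticProduct_sub_eq_iff (h2 : IsSMulRegular M (2 : R)) (hB : B.IsAlt)
    (hf : ∀ x y z : M, f x y z = f x z y + B y z • x) (x y z : M) :
    symplecticProduct B f z y x - symplecticProduct B f z x y =
        B z x • y - B z y • x + (2 * B y x) • z ↔
      f x y z = f y x z + B x y • z := by
  have sub_eq : symplecticProduct B f z y x - symplecticProduct B f z x y -
      (B z x • y - B z y • x + (2 * B y x) • z) =
      -((2 : R) • (f x y z - (f y x z + B x y • z))) := by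
    simp only [symplecticProduct_apply, hf x z y, hf y z x, ← hB.neg x y]
    module
  exact eq_iff_eq_of_sub_eq_neg_smul_sub h2 sub_eq

theorem isTripleDerivation_symplecticProduct_iff (h2 : IsSMulRegular M (2 : R))
    {D : Module.End R M} (hD : B.IsSkewAdjoint D) :
    IsTripleDerivation (symplecticProduct B f) D ↔ IsTripleDerivation f D := by
  have sub_eq (x y z : M) :
      D (symplecticProduct B f y z x) - (symplecticProduct B f (D y) z x +
        symplecticProduct B f y (D z) x + symplecticProduct B f y z (D x)) =
      -((2 : R) • (D (f x y z) - (f (D x) y z + f x (D y) z + f x y (D z)))) := by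
    have hyz : B (D y) z = -B y (D z) := by simpa using hD y z
    simp only [symplecticProduct_apply, map_add, map_neg, map_smul, hyz]
    module
  have leibniz_iff (x y z : M) :
      D (symplecticProduct B f y z x) = symplecticProduct B f (D y) z x +
        symplecticProduct B f y (D z) x + symplecticProduct B f y z (D x) ↔
      D (f x y z) = f (D x) y z + f x (D y) z + f x y (D z) :=
    eq_iff_eq_of_sub_eq_neg_smul_sub h2 (sub_eq x y z)
  exact ⟨fun h x y z => (leibniz_iff x y z).1 (h y z x),
    fun h y z x => (leibniz_iff x y z).2 (h x y z)⟩

theorem isTripleDerivation_symplecticProduct_apply_iff (h2 : IsSMulRegular M (2 : R))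
    (hB : B.IsAlt) (hf : ∀ x y z : M, f x y z = f x z y + B y z • x) (v w : M) :
    IsTripleDerivation f (symplecticProduct B f v w) ↔
      ∀ x y z : M, f (f x y z) v w = f (f x v w) y z + f x (f y v w) z + f x y (f z w v) := by
  refine forall₃_congr fun x y z => ?_
  have sub_eq : symplecticProduct B f v w (f x y z) - (f (symplecticProduct B f v w x) y z +
      f x (symplecticProduct B f v w y) z + f x y (symplecticProduct B f v w z)) =
      -((2 : R) • (f (f x y z) v w -
        (f (f x v w) y z + f x (f y v w) z + f x y (f z w v)))) := by
    simp only [symplecticProduct_apply, hf z w v, ← hB.neg v w, map_add, map_neg, map_smul,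
      LinearMap.add_apply, LinearMap.neg_apply, LinearMap.smul_apply]
    module
  exact eq_iff_eq_of_sub_eq_neg_smul_sub h2 sub_eq

variable [IsDomain R] [Module.IsTorsionFree R M]

theorem isAlt_of_eq_swap_add_smul (hf : ∀ x y z : M, f x y z = f y x z + B x y • z) :
    B.IsAlt := by
  intro x
  have hx : B x x • x = 0 := by simpa using hf x x x
  rcases smul_eq_zero.mp hx with h | rfl
  · exact h
  · simp

theorem IsTripleDerivation.isSkewAdjoint {D : Module.End R M}
    (hD : IsTripleDerivation f D) (hf : ∀ x y z : M, f x y z = f y x z + B x y • z) :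
    B.IsSkewAdjoint D := by
  refine isSkewAdjoint_iff_add_eq_zero.2 fun x y => ?_
  have hx : (B (D x) y + B x (D y)) • x = 0 := by
    have hxyx := congrArg D (hf x y x)
    rw [map_add, map_smul, hD x y x, hD y x x, hf (D x) y x, hf x (D y) x,
      hf x y (D x)] at hxyx
    linear_combination (norm := module) hxyx
  rcases smul_eq_zero.mp hx with h | rfl
  · exact h
  · simp

end TripleProduct

section Field

variable {k T : Type*} [Field k] [AddCommGroup T] [Module k T]
  {B : T →ₗ[k] T →ₗ[k] k} {f : T →ₗ[k] T →ₗ[k] T →ₗ[k] T}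

theorem STSIdentities.isAlt {t : T →ₗ[k] T →ₗ[k] T →ₗ[k] T} (h2 : (2 : k) ≠ 0)
    (h : STSIdentities k t B) : B.IsAlt := by
  intro x
  have hx : (2 * B x x) • x = 0 := by simpa using (h.2.1 x x x).symm
  rcases smul_eq_zero.mp hx with hBx | rfl
  · exact (mul_eq_zero.mp hBx).resolve_left h2
  · simp

theorem stsIdentities_symplecticProduct_iff (h2 : (2 : k) ≠ 0) :
    STSIdentities k (symplecticProduct B f) B ↔ IsFaulknerTernary k f B := by
  have h2T : IsSMulRegular T (2 : k) := .of_ne_zero h2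
  constructor
  · intro h
    have hB := h.isAlt h2
    obtain ⟨ha, hb, hc, hd⟩ := h
    have hsecond (x y z : T) := (symplecticProduct_comm_iff h2T hB x y z).1 (ha y z x)
    have hfirst (x y z : T) := (symplecticProduct_sub_eq_iff h2T hB hsecond x y z).1 (hb z y x)
    have hder (v w : T) : IsTripleDerivation f (symplecticProduct B f v w) :=
      (isTripleDerivation_symplecticProduct_iff h2T
        (isSkewAdjoint_iff_add_eq_zero.2 (hd v w))).1 (hc v w)
    exact ⟨hfirst, hsecond, fun x y z v w =>
      (isTripleDerivation_symplecticProduct_apply_iff h2T hB hsecond v w).1 (hder v w) x y z⟩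
  · rintro ⟨hfirst, hsecond, hthird⟩
    have hB := isAlt_of_eq_swap_add_smul hfirst
    have hder (v w : T) : IsTripleDerivation f (symplecticProduct B f v w) :=
      (isTripleDerivation_symplecticProduct_apply_iff h2T hB hsecond v w).2
        fun x y z => hthird x y z v w
    have hskew (v w : T) := (hder v w).isSkewAdjoint hfirst
    exact ⟨fun y z x => (symplecticProduct_comm_iff h2T hB x y z).2 (hsecond x y z),
      fun z y x => (symplecticProduct_sub_eq_iff h2T hB hsecond x y z).2 (hfirst x y z),
      fun v w => (isTripleDerivation_symplecticProduct_iff h2T (hskew v w)).2 (hder v w),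
      fun v w => isSkewAdjoint_iff_add_eq_zero.1 (hskew v w)⟩

theorem STSIdentities_iff_Faulkner_general (hchar : ringChar k ≠ 2)
    {tp : T →ₗ[k] T →ₗ[k] T →ₗ[k] T}
    (hrel : ∀ x y z : T, tp x y z = -((2 : k) • f z x y) + B x y • z) :
    (STSIdentities k tp B ↔ IsFaulknerTernary k f B) ∧
    ∃ e : {p : (T →ₗ[k] T →ₗ[k] T →ₗ[k] T) × (T →ₗ[k] T →ₗ[k] k) //
            (∀ x : T, p.2 x x = 0) ∧ p.2 ≠ 0 ∧ STSIdentities k p.1 p.2} ≃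
          {p : (T →ₗ[k] T →ₗ[k] T →ₗ[k] T) × (T →ₗ[k] T →ₗ[k] k) //
            (∀ x : T, p.2 x x = 0) ∧ p.2 ≠ 0 ∧ IsFaulknerTernary k p.1 p.2},
      ∀ p, (e p).val.2 = p.val.2 ∧
        ∀ x y z : T, p.val.1 x y z = -((2 : k) • (e p).val.1 z x y) + p.val.2 x y • z := by
  have h2 : (2 : k) ≠ 0 := Ring.two_ne_zero hchar
  let : Invertible (2 : k) := invertibleOfNonzero h2
  obtain rfl : tp = symplecticProduct B f := by
    ext x y z
    exact hrel x y z
  let e : (T →ₗ[k] T →ₗ[k] T →ₗ[k] T) × (T →ₗ[k] T →ₗ[k] k) ≃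
      (T →ₗ[k] T →ₗ[k] T →ₗ[k] T) × (T →ₗ[k] T →ₗ[k] k) :=
    { toFun p := ((symplecticProductEquiv p.2).symm p.1, p.2)
      invFun p := (symplecticProductEquiv p.2 p.1, p.2)
      left_inv p := by simp
      right_inv p := by simp }
  have he (p) : symplecticProduct (e p).2 (e p).1 = p.1 :=
    (symplecticProductEquiv p.2).apply_symm_apply p.1
  refine ⟨stsIdentities_symplecticProduct_iff h2, e.subtypeEquiv fun p => ?_,
    fun p => ⟨rfl, fun x y z => ?_⟩⟩
  · rw [← stsIdentities_symplecticProduct_iff h2, he]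
    rfl
  · exact congr($(he p.1) x y z).symm

end Field

/-- Let `B` be an alternating bilinear form on `T` (char ≠ 2) and
`tp`, `f` triple products related by `tp x y z = -2 f z x y + B x y • z`. Then `(T, tp, B)`
satisfies the symplectic triple system identities (a)–(d) iff `(T, f, B)` is a Faulkner
ternary algebra. In particular, the symplectic triple systems on `T` (those with `B ≠ 0`)
are in bijection with the Faulkner ternary algebras on `T` with nonzero form. -/
theorem STSIdentities_iff_Faulkner (k T : Type*) [Field k] [AddCommGroup T] [Module k T]
    [FiniteDimensional k T] (hchar : ringChar k ≠ 2)
    (B : T →ₗ[k] T →ₗ[k] k) (halt : ∀ x : T, B x x = 0)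
    (tp f : T →ₗ[k] T →ₗ[k] T →ₗ[k] T)
    (hrel : ∀ x y z : T, tp x y z = -((2 : k) • f z x y) + B x y • z) :
    (STSIdentities k tp B ↔ IsFaulknerTernary k f B) ∧
    ∃ e : {p : (T →ₗ[k] T →ₗ[k] T →ₗ[k] T) × (T →ₗ[k] T →ₗ[k] k) //
            (∀ x : T, p.2 x x = 0) ∧ p.2 ≠ 0 ∧ STSIdentities k p.1 p.2} ≃
          {p : (T →ₗ[k] T →ₗ[k] T →ₗ[k] T) × (T →ₗ[k] T →ₗ[k] k) //
            (∀ x : T, p.2 x x = 0) ∧ p.2 ≠ 0 ∧ IsFaulknerTernary k p.1 p.2},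
      ∀ p, (e p).val.2 = p.val.2 ∧
        ∀ x y z : T, p.val.1 x y z = -((2 : k) • (e p).val.1 z x y) + p.val.2 x y • z := by
  exact STSIdentities_iff_Faulkner_general hchar hrel
end
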